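/- arXiv:1802.09303 — 3 statements merged into one kernel-verified Lean document; each statement's English description precedes it below -/
import Mathlib

section
/- Let d ∈ ℝ^m, a ∈ ℝ^m, and δ, γ ∈ ℝ with γ > 0, and define J(α) = ½δ − ½αγ − ½ Σ_{i=1}^m a_i²/(d_i − α). Suppose α₀ ≤ α₁ < min_i d_i satisfy J(α₀) ≥ 0 and J(α₁) ≤ 0. Then there exists exactly one α* ∈ [α₀, α₁] with J(α*) = 0. -/
/-- existence and uniqueness of the root of `J` in Theorem 1(ii) of the
paper. For `γ > 0` and `J(α) = ½δ − ½αγ − ½ Σ_i a_i²/(d_i − α)`, if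
`α₀ ≤ α₁ < min_i d_i`, `J(α₀) ≥ 0` and `J(α₁) ≤ 0`, then there is exactly one
`α* ∈ [α₀, α₁]` with `J(α*) = 0`. -/
theorem stmt_10 {m : ℕ} (d a : Fin m → ℝ) (δ γ : ℝ) (hγ : 0 < γ)
    (J : ℝ → ℝ)
    (hJ : ∀ α : ℝ, J α = δ / 2 - α * γ / 2 - (1 / 2) * ∑ i, (a i) ^ 2 / (d i - α))
    (α₀ α₁ : ℝ) (h01 : α₀ ≤ α₁) (h1d : ∀ i, α₁ < d i)
    (h0 : 0 ≤ J α₀) (h1 : J α₁ ≤ 0) :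
    ∃! α : ℝ, α ∈ Set.Icc α₀ α₁ ∧ J α = 0 := by
  have hc : ContinuousOn J (Set.Icc α₀ α₁) := by
    have hJ' : J = fun α => δ / 2 - α * γ / 2 - (1 / 2) * ∑ i, (a i) ^ 2 / (d i - α) :=
      funext hJ
    rw [hJ']
    refine ContinuousOn.sub (by fun_prop) (ContinuousOn.mul (by fun_prop) ?_)
    refine continuousOn_finsetSum _ fun i _ => ?_
    refine ContinuousOn.div (by fun_prop) (by fun_prop) fun x hx => ?_
    have h := h1d i
    have h2 := hx.2
    exact ne_of_gt (by linarith)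
  have hs : StrictAntiOn J (Set.Icc α₀ α₁) := by
    intro x hx y hy hxy
    rw [hJ x, hJ y]
    have hsum : ∑ i, (a i) ^ 2 / (d i - x) ≤ ∑ i, (a i) ^ 2 / (d i - y) := by
      refine Finset.sum_le_sum fun i _ => ?_
      have h := h1d i
      have h2 := hy.2
      exact div_le_div_of_nonneg_left (sq_nonneg _) (by linarith) (by linarith)
    have := mul_lt_mul_of_pos_right hxy hγ
    linarith
  obtain ⟨x, hx, hx0⟩ := intermediate_value_Icc' h01 hc ⟨h1, h0⟩
  exact ⟨x, ⟨hx, hx0⟩, fun y hy => hs.injOn hy.1 hx (hy.2.trans hx0.symm)⟩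
end

section
/- Let L̂ ∈ ℝ and L : ℝ^m → ℝ. Let y⁰, y¹, …, y^m ∈ ℝ^m be one full cycle of coordinate descent with bound constraint y ≥ L̂ componentwise: for each j = 1,…,m, y^j = y^{j−1} + β_j e_j, where β_j is a global minimizer of the one-dimensional subproblem min{L(y^{j−1} + α e_j) : (y^{j−1})_j + α ≥ L̂}, and assume each of these m one-dimensional subproblems has a unique global minimizer. Also assume y⁰ ≥ L̂ componentwise. If L(y^m) = L(y⁰), then y^m = y⁰ and y⁰ is a coordinate-wise minimum: for every i ∈ {1,…,m} and every α ∈ ℝ with (y⁰)_i + α ≥ L̂, one has L(y⁰) ≤ L(y⁰ + α e_i). -/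
/-- the core argument of Proposition 1 of the paper. One full cycle
`y⁰, y¹, …, y^m` of coordinate descent for `min { L(y) : y ≥ L̂ }` updates
`y^j = y^{j−1} + β_j e_j`, where `β_j` globally (and uniquely) solves the
one-dimensional subproblem `min { L(y^{j−1} + α e_j) : (y^{j−1})_j + α ≥ L̂ }`.
If `L(y^m) = L(y⁰)`, then `y^m = y⁰` and `y⁰` is a coordinate-wise minimum. -/
theorem stmt_16 {m : ℕ} (Lhat : ℝ) (L : (Fin m → ℝ) → ℝ)
    (y : ℕ → (Fin m → ℝ)) (β : Fin m → ℝ)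
    (hfeas0 : ∀ i : Fin m, Lhat ≤ y 0 i)
    (hupdate : ∀ j : Fin m, y ((j : ℕ) + 1) = y (j : ℕ) + β j • (Pi.single j 1 : Fin m → ℝ))
    (hβfeas : ∀ j : Fin m, Lhat ≤ y (j : ℕ) j + β j)
    (hβmin : ∀ j : Fin m, ∀ α : ℝ, Lhat ≤ y (j : ℕ) j + α →
        L (y (j : ℕ) + β j • (Pi.single j 1 : Fin m → ℝ)) ≤ L (y (j : ℕ) + α • (Pi.single j 1 : Fin m → ℝ)))
    (hβuniq : ∀ j : Fin m, ∀ α : ℝ, Lhat ≤ y (j : ℕ) j + α →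
        L (y (j : ℕ) + α • (Pi.single j 1 : Fin m → ℝ)) = L (y (j : ℕ) + β j • (Pi.single j 1 : Fin m → ℝ)) →
        α = β j)
    (hLeq : L (y m) = L (y 0)) :
    y m = y 0 ∧
      ∀ (i : Fin m) (α : ℝ), Lhat ≤ y 0 i + α →
        L (y 0) ≤ L (y 0 + α • (Pi.single i 1 : Fin m → ℝ)) := by
  have hfeas : ∀ k : ℕ, k ≤ m → ∀ i : Fin m, Lhat ≤ y k i := by
    intro k
    induction k with
    | zero => intro _ i; exact hfeas0 i
    | succ k ih =>
      intro hk i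
      have hu := hupdate ⟨k, hk⟩
      have hb := hβfeas ⟨k, hk⟩
      simp only at hu hb
      rw [hu]
      by_cases h : i = ⟨k, hk⟩
      · subst h; simpa using hb
      · simpa [Pi.single_apply, h] using ih (by omega) i
  have hstep : ∀ j : Fin m, L (y ((j : ℕ) + 1)) ≤ L (y (j : ℕ)) := by
    intro j
    have h := hβmin j 0 (by simpa using hfeas j j.2.le j)
    rw [hupdate j]
    simpa using h
  have hanti : Antitone (fun k : ℕ => L (y (min k m))) := by
    apply antitone_nat_of_succ_le
    intro k
    by_cases hk : k < m
    · have h := hstep ⟨k, hk⟩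
      simp only at h
      rw [min_eq_left hk.le, min_eq_left (Nat.succ_le_of_lt hk)]
      exact h
    · rw [min_eq_right (by omega : m ≤ k), min_eq_right (by omega : m ≤ k + 1)]
  have hval : ∀ k : ℕ, k ≤ m → L (y k) = L (y 0) := by
    intro k hk
    have h1 := hanti (Nat.zero_le k)
    have h2 := hanti hk
    simp only [min_eq_left hk, min_self, Nat.zero_min] at h1 h2
    linarith
  have hβ0 : ∀ j : Fin m, β j = 0 := by
    intro j
    refine (hβuniq j 0 (by simpa using hfeas j j.2.le j) ?_).symm
    rw [← hupdate j, hval _ j.2]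
    simpa using hval j j.2.le
  have hy : ∀ k : ℕ, k ≤ m → y k = y 0 := by
    intro k
    induction k with
    | zero => intro _; rfl
    | succ k ih =>
      intro hk
      have hu := hupdate ⟨k, hk⟩
      rw [hβ0] at hu
      simp only [zero_smul, add_zero] at hu
      rw [hu, ih (by omega)]
  refine ⟨hy m le_rfl, fun i α hα => ?_⟩
  have h := hβmin i α
  rw [hβ0, hy i i.2.le] at h
  simpa using h hα
end

section
/- Let A, C be n×n real symmetric matrices with C positive definite, define f(x) = (xᵀAx)/(xᵀCx) for x ≠ 0, and let θ > 0, σ > 0, and integers 1 ≤ k ≤ n and s ≥ 1. Let x ∈ ℝⁿ be nonzero with ‖x‖₀ ≤ s. Suppose that for every subset B of {1,…,n} of cardinality k there is a nonzero vector x^B ∈ ℝⁿ such that: x^B_i = x_i for all i ∉ B; ‖x^B‖₀ ≤ s; (x^B)ᵀC x^B ≤ σ; and x^B globally solves the proximal subproblem, i.e., for every nonzero z ∈ ℝⁿ with z_i = x_i for all i ∉ B and ‖z‖₀ ≤ s, (½(x^B)ᵀA x^B + (θ/2)‖x^B − x‖₂²)/(½(x^B)ᵀC x^B) ≤ (½zᵀAz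 + (θ/2)‖z − x‖₂²)/(½zᵀCz). Then the average over all C(n,k) such subsets B of f(x^B) is at most f(x) − (θ/σ) times the average over all such subsets B of ‖x^B − x‖₂². -/
open Matrix

/-- the per-iteration expected descent inequality underlying Theorem 2(i)
of the paper. For each size-`k` working set `B`, let `X B` be a global solution of the
proximal subproblem at `x` (agreeing with `x` off `B`, nonzero, `s`-sparse, with
`(X B)ᵀC(X B) ≤ σ`). Then the average over all `C(n,k)` subsets `B` of `f(X B)` is at
most `f(x) − (θ/σ)` times the average over all such `B` of `‖X B − x‖₂²`. -/
theorem stmt_19 {n : ℕ} (A C : Matrix (Fin n) (Fin n) ℝ)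
    (hA : A.IsHermitian) (hC : C.PosDef)
    (θ σ : ℝ) (hθ : 0 < θ) (hσ : 0 < σ)
    (k s : ℕ) (hk1 : 1 ≤ k) (hkn : k ≤ n) (hs : 1 ≤ s)
    (x : Fin n → ℝ) (hx : x ≠ 0) (hxs : Set.ncard {i | x i ≠ 0} ≤ s)
    (X : Finset (Fin n) → (Fin n → ℝ))
    (hXne : ∀ B : Finset (Fin n), B.card = k → X B ≠ 0)
    (hXagree : ∀ B : Finset (Fin n), B.card = k → ∀ i ∉ B, X B i = x i)
    (hXs : ∀ B : Finset (Fin n), B.card = k → Set.ncard {i | X B i ≠ 0} ≤ s)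
    (hXσ : ∀ B : Finset (Fin n), B.card = k → (X B) ⬝ᵥ (C *ᵥ X B) ≤ σ)
    (hXsol : ∀ B : Finset (Fin n), B.card = k →
        ∀ z : Fin n → ℝ, z ≠ 0 → (∀ i ∉ B, z i = x i) → Set.ncard {i | z i ≠ 0} ≤ s →
        ((1 / 2) * (X B ⬝ᵥ (A *ᵥ X B)) + (θ / 2) * ((X B - x) ⬝ᵥ (X B - x))) /
            ((1 / 2) * (X B ⬝ᵥ (C *ᵥ X B)))
          ≤ ((1 / 2) * (z ⬝ᵥ (A *ᵥ z)) + (θ / 2) * ((z - x) ⬝ᵥ (z - x))) /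
            ((1 / 2) * (z ⬝ᵥ (C *ᵥ z)))) :
    (∑ B ∈ Finset.powersetCard k (Finset.univ : Finset (Fin n)),
        (X B ⬝ᵥ (A *ᵥ X B)) / (X B ⬝ᵥ (C *ᵥ X B))) / (n.choose k)
      ≤ (x ⬝ᵥ (A *ᵥ x)) / (x ⬝ᵥ (C *ᵥ x))
        - (θ / σ) * ((∑ B ∈ Finset.powersetCard k (Finset.univ : Finset (Fin n)),
            ((X B - x) ⬝ᵥ (X B - x))) / (n.choose k)) := by
  have pos : ∀ v : Fin n → ℝ, v ≠ 0 → 0 < v ⬝ᵥ (C *ᵥ v) := by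
    intro v hv
    have h := hC.dotProduct_mulVec_pos hv
    simpa using h
  have key : ∀ B ∈ Finset.powersetCard k (Finset.univ : Finset (Fin n)),
      (X B ⬝ᵥ (A *ᵥ X B)) / (X B ⬝ᵥ (C *ᵥ X B)) ≤
        (x ⬝ᵥ (A *ᵥ x)) / (x ⬝ᵥ (C *ᵥ x)) - (θ / σ) * ((X B - x) ⬝ᵥ (X B - x)) := by
    intro B hB
    have hc : B.card = k := (Finset.mem_powersetCard.mp hB).2
    have h := hXsol B hc x hx (fun _ _ => rfl) hxs
    have hp := pos _ (hXne B hc)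
    have hq := pos _ hx
    have hle := hXσ B hc
    have hd : 0 ≤ (X B - x) ⬝ᵥ (X B - x) :=
      Finset.sum_nonneg fun i _ => mul_self_nonneg _
    rw [sub_self x, zero_dotProduct, mul_zero, add_zero,
      mul_div_mul_left _ _ (by norm_num : (1 / 2 : ℝ) ≠ 0)] at h
    generalize (X B - x) ⬝ᵥ (X B - x) = d at *
    generalize X B ⬝ᵥ (C *ᵥ X B) = c at *
    generalize X B ⬝ᵥ (A *ᵥ X B) = a at *
    have e : (1 / 2 * a + θ / 2 * d) / (1 / 2 * c) = a / c + θ * d / c := by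
      field_simp
    have h2 : θ * d / σ ≤ θ * d / c :=
      div_le_div_of_nonneg_left (by positivity) hp hle
    have h3 : θ / σ * d = θ * d / σ := by ring
    rw [e] at h
    linarith
  have hch : (0 : ℝ) < n.choose k := by exact_mod_cast Nat.choose_pos hkn
  have hsum := Finset.sum_le_sum key
  rw [Finset.sum_sub_distrib, ← Finset.mul_sum, Finset.sum_const, Finset.card_powersetCard,
    Finset.card_univ, Fintype.card_fin, nsmul_eq_mul] at hsum
  rw [div_le_iff₀ hch]
  refine hsum.trans (le_of_eq ?_)
  rw [sub_mul, mul_assoc, div_mul_cancel₀ _ hch.ne', mul_comm]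
end
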